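/- arXiv:1806.00241 — 2 statements merged into one kernel-verified Lean document; each statement's English description precedes it below -/
import Mathlib

section
/- Let K ≥ 1 be an integer, let τ ∈ (0,1), and for k ∈ {1,…,K} let q_k ∈ (0,1) and D_k be real numbers. Suppose that for every k: 1/q_k − (K−1)/(1−q_k) = τ D_k / ((1−τ) q_k²), and that K/(1−τ) = ∑_{k=1}^K D_k / ((1−τ)² q_k). Then τ = (1/K) ∑_{k=1}^K (1 − K q_k)/(1 − q_k). -/
/-- Combining the first-order optimality conditions in `q_k` and `τ₀` of the
proportional-fairness objective yields `τ = (1/K) ∑ₖ (1 - K q_k)/(1 - q_k)`. -/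
theorem tau_from_first_order_conditions (K : ℕ) (hK : 1 ≤ K) (τ : ℝ)
    (hτ : τ ∈ Set.Ioo (0 : ℝ) 1) (q D : Fin K → ℝ)
    (hq : ∀ k, q k ∈ Set.Ioo (0 : ℝ) 1)
    (h1 : ∀ k, 1 / q k - ((K : ℝ) - 1) / (1 - q k) = τ * D k / ((1 - τ) * (q k) ^ 2))
    (h2 : (K : ℝ) / (1 - τ) = ∑ k, D k / ((1 - τ) ^ 2 * q k)) :
    τ = (1 / (K : ℝ)) * ∑ k, (1 - (K : ℝ) * q k) / (1 - q k) := by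
  obtain ⟨hτ0, hτ1⟩ := hτ
  have hs : (1 - τ) ≠ 0 := by linarith
  have hK0 : (K : ℝ) ≠ 0 := by
    have : K ≠ 0 := by omega
    exact_mod_cast this
  -- Multiplying the condition in `q k` by `q k` turns each summand of the goal into
  -- `τ (1 - τ)` times the corresponding summand of the condition in `τ`.
  have key : ∀ k, (1 - (K : ℝ) * q k) / (1 - q k)
      = τ * (1 - τ) * (D k / ((1 - τ) ^ 2 * q k)) := by
    intro k
    obtain ⟨hq0, hq1⟩ := hq k
    have hqk : q k ≠ 0 := hq0.ne'
    have hqs : 1 - q k ≠ 0 := by linarith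
    calc (1 - (K : ℝ) * q k) / (1 - q k)
        = q k * (1 / q k - ((K : ℝ) - 1) / (1 - q k)) := by
          field_simp
          ring
      _ = q k * (τ * D k / ((1 - τ) * (q k) ^ 2)) := by rw [h1 k]
      _ = τ * (1 - τ) * (D k / ((1 - τ) ^ 2 * q k)) := by
          field_simp
  rw [Finset.sum_congr rfl fun k _ => key k, ← Finset.mul_sum, ← h2]
  field_simp
end

section
/- For every m > 0, the function f(x) = x^{m} e^{−x} / Γ(m, x) is strictly increasing on (0, ∞). -/
/-!
Substituting `t = x * s` gives `Γ(m, x) = x ^ m * e ^ (-x) * G(x)` for `x > 0`, where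
`G(x) = ∫_1^∞ s ^ (m - 1) * e ^ (-x (s - 1)) ds` (`uGamma_eq_mul_scaledGamma`). Hence the function
in question is `1 / G`. For each `s > 1` the integrand of `G` is positive and strictly decreasing
in `x`, so `G` is positive and strictly decreasing, and `1 / G` is strictly increasing.
-/

/-- The upper incomplete gamma function `Γ(m, x) = ∫_x^∞ t^(m-1) e^(-t) dt`. -/
noncomputable def uGamma (m x : ℝ) : ℝ := ∫ t in Set.Ioi x, t ^ (m - 1) * Real.exp (-t)

open MeasureTheory Set

/-- The ratio `Γ(m, x) / (x ^ m * e ^ (-x))`, written as an integral over a domain that does not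
depend on `x`. -/
noncomputable def scaledGamma (m x : ℝ) : ℝ :=
  ∫ s in Ioi (1 : ℝ), s ^ (m - 1) * Real.exp (-(x * (s - 1)))

lemma scaledGamma_integrand_eq (m : ℝ) {x s : ℝ} (hx : 0 < x) (hs : 0 < s) :
    (x * s) ^ (m - 1) * Real.exp (-(x * s)) =
      x ^ (m - 1) * Real.exp (-x) * (s ^ (m - 1) * Real.exp (-(x * (s - 1)))) := by
  have h : Real.exp (-(x * s)) = Real.exp (-x) * Real.exp (-(x * (s - 1))) := by
    rw [← Real.exp_add]
    ring_nf
  rw [Real.mul_rpow hx.le hs.le, h]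
  ring

lemma uGamma_eq_mul_scaledGamma (m : ℝ) {x : ℝ} (hx : 0 < x) :
    uGamma m x = x ^ m * Real.exp (-x) * scaledGamma m x := by
  have h := integral_comp_mul_left_Ioi' (fun t : ℝ => t ^ (m - 1) * Real.exp (-t)) 1 hx
  rw [mul_one] at h
  have h2 : ∫ s in Ioi (1 : ℝ), (x * s) ^ (m - 1) * Real.exp (-(x * s)) =
      x ^ (m - 1) * Real.exp (-x) * scaledGamma m x := by
    rw [scaledGamma, ← integral_const_mul]
    exact setIntegral_congr_fun measurableSet_Ioi fun s hs =>
      scaledGamma_integrand_eq m hx (zero_lt_one.trans hs)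
  have h3 : x ^ m = x * x ^ (m - 1) := by
    rw [Real.rpow_sub_one hx.ne']
    field_simp
  rw [uGamma, ← h, h2, h3, smul_eq_mul]
  ring

lemma integrableOn_scaledGamma {m x : ℝ} (hm : 0 < m) (hx : 0 < x) :
    IntegrableOn (fun s : ℝ => s ^ (m - 1) * Real.exp (-(x * (s - 1)))) (Ioi 1) := by
  have h0 : IntegrableOn (fun t : ℝ => Real.exp (-t) * t ^ (m - 1)) (Ioi (x * 1)) :=
    (Real.GammaIntegral_convergent hm).mono_set (Ioi_subset_Ioi (by linarith))
  have h1 := (integrableOn_Ioi_comp_mul_left_iff _ 1 hx).2 h0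
  have hc : x ^ (m - 1) * Real.exp (-x) ≠ 0 := by positivity
  refine IntegrableOn.congr_fun (h1.const_mul (x ^ (m - 1) * Real.exp (-x))⁻¹) (fun s hs => ?_)
    measurableSet_Ioi
  have h2 := scaledGamma_integrand_eq m hx (zero_lt_one.trans hs)
  rw [mul_comm (Real.exp (-(x * s))), h2, inv_mul_cancel_left₀ hc]

lemma setIntegral_Ioi_pos {f : ℝ → ℝ} {a : ℝ} (hf : IntegrableOn f (Ioi a))
    (hpos : ∀ s ∈ Ioi a, 0 < f s) : 0 < ∫ s in Ioi a, f s := by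
  rw [setIntegral_pos_iff_support_of_nonneg_ae
    (ae_restrict_of_forall_mem measurableSet_Ioi fun s hs => (hpos s hs).le) hf,
    inter_eq_right.2 (show Ioi a ⊆ Function.support f from fun s hs => (hpos s hs).ne')]
  simp

lemma scaledGamma_pos {m x : ℝ} (hm : 0 < m) (hx : 0 < x) : 0 < scaledGamma m x :=
  setIntegral_Ioi_pos (integrableOn_scaledGamma hm hx) fun _ hs =>
    mul_pos (Real.rpow_pos_of_pos (zero_lt_one.trans hs) _) (Real.exp_pos _)

lemma scaledGamma_lt {m a b : ℝ} (hm : 0 < m) (ha : 0 < a) (hab : a < b) :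
    scaledGamma m b < scaledGamma m a := by
  have hia := integrableOn_scaledGamma hm ha
  have hib := integrableOn_scaledGamma hm (ha.trans hab)
  rw [← sub_pos, scaledGamma, scaledGamma, ← integral_sub hia hib]
  refine setIntegral_Ioi_pos (hia.sub hib) fun s hs => sub_pos.2 ?_
  have hs1 : 0 < s - 1 := sub_pos.2 hs
  have hs0 : 0 < s ^ (m - 1) := Real.rpow_pos_of_pos (zero_lt_one.trans hs) _
  gcongr

lemma div_uGamma_eq (m : ℝ) {x : ℝ} (hx : 0 < x) :
    x ^ m * Real.exp (-x) / uGamma m x = (scaledGamma m x)⁻¹ := by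
  have hc : x ^ m * Real.exp (-x) ≠ 0 := by positivity
  rw [uGamma_eq_mul_scaledGamma m hx, div_mul_eq_div_div, div_self hc, one_div]

/-- For every `m > 0`, the auxiliary function `f(x) = x^m e^(-x) / Γ(m, x)` is strictly
increasing on `(0, ∞)`. -/
theorem auxiliary_f_strictMonoOn (m : ℝ) (hm : 0 < m) :
    StrictMonoOn (fun x : ℝ => x ^ m * Real.exp (-x) / uGamma m x) (Set.Ioi 0) := by
  intro a ha b hb hab
  dsimp only
  rw [div_uGamma_eq m ha, div_uGamma_eq m hb]
  exact inv_strictAnti₀ (scaledGamma_pos hm hb) (scaledGamma_lt hm ha hab)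
end
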